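/- Determination of FMC(6): for all integers m, n with 3 ≤ m ≤ n and n ≥ 6, there exists a proper edge-coloring of K_{m,n} using at most n colors that contains no multicolored cycle of length 6 if and only if (n = 6 and 3 ≤ m ≤ 6), or (m,n) = (3,7), or (n = 8 and 3 ≤ m ≤ 8). -/

import Mathlib

/-!
In three rows `f, g, h` of the coloring, a multicolored hexagon is a choice of columns `x, y, z` for
which `f x, g x, g y, h y, h z, f z` are distinct (`hasRainbow_iff`); the columns are then distinct
automatically. All rows use all `n` colors.

* If `n ≥ 9`, the hexagon is found greedily: two colors spoil at most four choices of `y`, and four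
  colors spoil at most eight choices of `z` (`rainbow_of_nine_le`).
* If `n = 7` and there is no such hexagon, the permutation `f x ↦ g x` of the colors sends `g x` to
  `f x` or to `h x`. After renaming colors, this is a small finite search over columns
  (`step_seven`). With a fourth row available as a second choice for `h`, the value can only be
  `f x`, so the permutation is an involution without fixed points on seven colors, which is
  impossible (`rainbow_of_seven`).
* For `n = 6` and `n = 8` the Cayley tables of `ℤ/6` and `(ℤ/2)³` work: the six colors of a hexagon
  sum to twice the sum of its vertices, whereas the sum of all of `ℤ/6` is odd, and six
  distinct elements of `(ℤ/2)³` never sum to zero (`exists_coloring_of_group`).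
* For `(m, n) = (3, 7)` an explicit table is checked (`tableSeven`).
-/

/-- A proper edge-coloring of the complete bipartite graph with partite sets `V` and `W`:
edges are pairs `(v, w)`, the coloring is `c`, and edges sharing a vertex get distinct colors. -/
def ProperColoring {V W α : Type*} (c : V → W → α) : Prop :=
  (∀ v : V, Function.Injective fun w => c v w) ∧
  (∀ w : W, Function.Injective fun v => c v w)

/-- The edge-colored complete bipartite graph (with parts `V`, `W` and coloring `c`) contains a
multicolored (rainbow) cycle of length `2 * k`: there are distinct vertices
`a 0, …, a (k-1)` in `V` and `b 0, …, b (k-1)` in `W` forming the cycle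
`a 0 - b 0 - a 1 - b 1 - ⋯ - a (k-1) - b (k-1) - a 0`, whose `2k` edges
(`a i - b i` and `a (i+1) - b i`, indices mod `k`) receive pairwise distinct colors. -/
def HasRainbowCycle2k {V W α : Type*} (k : ℕ) (c : V → W → α) : Prop :=
  ∃ (a : ZMod k → V) (b : ZMod k → W),
    Function.Injective a ∧ Function.Injective b ∧
    Function.Injective (fun p : ZMod k × Bool =>
      if p.2 then c (a p.1) (b p.1) else c (a (p.1 + 1)) (b p.1))

/-- Two injective maps hit a set `S` at most `2|S|` times in total, so
some point is sent outside `S` by both. -/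
lemma exists_avoiding {n : ℕ} {u v : Fin n → Fin n} (hu : Function.Injective u)
    (hv : Function.Injective v) (S : Finset (Fin n)) (hS : 2 * S.card < n) :
    ∃ y, u y ∉ S ∧ v y ∉ S := by
  by_contra! h
  have hcover : (Finset.univ : Finset (Fin n)) ⊆
      Finset.univ.filter (fun y => u y ∈ S) ∪ Finset.univ.filter (fun y => v y ∈ S) := by
    intro y _
    by_cases hy : u y ∈ S
    · simp [hy]
    · simp [h y hy]
  have bound : ∀ w : Fin n → Fin n, Function.Injective w →
      (Finset.univ.filter (fun y => w y ∈ S)).card ≤ S.card := fun w hw =>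
    Finset.card_le_card_of_injOn w (by intro y hy; simpa using hy) hw.injOn
  have h1 := Finset.card_le_card hcover
  have h2 := Finset.card_union_le (Finset.univ.filter (fun y => u y ∈ S))
    (Finset.univ.filter (fun y => v y ∈ S))
  have h3 := bound u hu
  have h4 := bound v hv
  simp only [Finset.card_univ, Fintype.card_fin] at h1
  omega

/-- A multicolored 6-cycle is six distinct colors around a closed walk `p x q y r z`: distinctness of
the colors at a shared row or column already makes the rows and the columns distinct. -/
lemma hasRainbow_iff {V W α : Type*} (c : V → W → α) :
    HasRainbowCycle2k 3 c ↔ ∃ p q r x y z,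
      [c p x, c q x, c q y, c r y, c r z, c p z].Nodup := by
  constructor
  · rintro ⟨a, b, -, -, h⟩
    refine ⟨a 0, a 1, a 2, b 0, b 1, b 2, ?_⟩
    have hl : ([((0 : ZMod 3), true), (0, false), (1, true), (1, false), (2, true),
      (2, false)]).Nodup := by decide
    have := hl.map h
    exact this
  · rintro ⟨p, q, r, x, y, z, h⟩
    refine ⟨![p, q, r], ![x, y, z], ?_, ?_, ?_⟩
    · intro i j hij
      fin_cases i <;> fin_cases j <;> first | rfl | (simp at hij; subst hij; simp at h)
    · intro i j hij
      fin_cases i <;> fin_cases j <;> first | rfl | (simp at hij; subst hij; simp at h)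
    · let a : ZMod 3 → V := ![p, q, r]
      let b : ZMod 3 → W := ![x, y, z]
      have hl : (List.map (fun s : ZMod 3 × Bool =>
          if s.2 then c (a s.1) (b s.1) else c (a (s.1 + 1)) (b s.1))
          [((0 : ZMod 3), true), (0, false), (1, true), (1, false), (2, true),
            (2, false)]).Nodup := h
      have hmem : ∀ s : ZMod 3 × Bool, s ∈ [((0 : ZMod 3), true), (0, false), (1, true),
          (1, false), (2, true), (2, false)] := by decide
      intro s t hst
      exact List.inj_on_of_nodup_map hl (hmem s) (hmem t) hst

lemma rainbow_of_nine_le {n : ℕ} (hn : 9 ≤ n) {f g h : Fin n → Fin n}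
    (hf : Function.Injective f) (hg : Function.Injective g) (hh : Function.Injective h)
    (hfg : ∀ x, f x ≠ g x) (hgh : ∀ x, g x ≠ h x) (hhf : ∀ x, h x ≠ f x) :
    ∃ x y z, [f x, g x, g y, h y, h z, f z].Nodup := by
  let x : Fin n := ⟨0, by omega⟩
  obtain ⟨y, hy1, hy2⟩ := exists_avoiding hg hh {f x, g x}
    (by have := Finset.card_le_two (a := f x) (b := g x); omega)
  obtain ⟨z, hz1, hz2⟩ := exists_avoiding hh hf {f x, g x, g y, h y}
    (by have := Finset.card_le_four (a := f x) (b := g x) (c := g y) (d := h y); omega)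
  refine ⟨x, y, z, ?_⟩
  have h1 := hfg x
  have h2 := hgh y
  have h3 := hhf z
  simp only [Finset.mem_insert, Finset.mem_singleton, not_or] at hy1 hy2 hz1 hz2
  simp only [List.nodup_cons, List.mem_cons, List.not_mem_nil, not_or]
  grind

/-- A column of a three-row array, as the triple of its entries. -/
abbrev Col := Fin 7 × Fin 7 × Fin 7

/-- Columns `c`, `d`, `e` support a hexagon with six distinct colors. -/
def hexagon (c d e : Col) : Bool :=
  decide [c.1, c.2.1, d.2.1, d.2.2, e.2.2, e.1].Nodup

/-- The column `c` cannot be added to the list `L` of columns: it repeats a color, clashes with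
a column of `L` in the second or third row, or `c :: L` contains a multicolored hexagon. -/
def bad (c : Col) (L : List Col) : Bool :=
  c.1 == c.2.1 || c.2.1 == c.2.2 || c.2.2 == c.1 ||
  L.any (fun d => c.2.1 == d.2.1 || c.2.2 == d.2.2) ||
  (c :: L).any (fun d => (c :: L).any fun e => hexagon c d e || hexagon d c e || hexagon d e c)

/-- Every way of extending `L` by columns with first entries `ks`, taken in order, fails. -/
def search : List (Fin 7) → List Col → Bool
  | [], _ => false
  | k :: ks, L => (List.finRange 7).all fun i => (List.finRange 7).all fun j =>
      bad (k, i, j) L || search ks ((k, i, j) :: L)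

/-- No seven columns with first entries `0, …, 6` avoid a multicolored hexagon if one of them is
`(0, 1, 2)` and another begins with `(1, 3)`. -/
lemma search_spec : ((List.finRange 7).all fun j =>
    bad (1, 3, j) [(0, 1, 2)] || search [2, 3, 4, 5, 6] [(1, 3, j), (0, 1, 2)]) = true := by
  decide +kernel

/-- Soundness of `search`: if the columns of `T` are pairwise compatible, support no multicolored
hexagon and have every color as a first entry, then no list of columns of `T` is refuted. -/
lemma search_eq_false {T : Col → Prop} (hbad : ∀ c L, T c → (∀ d ∈ L, T d ∧ d.1 ≠ c.1) →
      bad c L = false) (hT : ∀ k, ∃ i j, T (k, i, j)) :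
    ∀ (ks : List (Fin 7)) (L : List Col), ks.Nodup → (∀ d ∈ L, T d ∧ d.1 ∉ ks) →
      search ks L = false
  | [], _, _, _ => rfl
  | k :: ks, L, hks, hL => by
    obtain ⟨i, j, hc⟩ := hT k
    rw [List.nodup_cons] at hks
    have h1 : bad (k, i, j) L = false :=
      hbad _ _ hc fun d hd => ⟨(hL d hd).1, fun h => (hL d hd).2 (by simp [h])⟩
    have h2 : search ks ((k, i, j) :: L) = false := by
      refine search_eq_false hbad hT ks _ hks.2 ?_
      intro d hd
      rcases List.mem_cons.1 hd with rfl | hd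
      · exact ⟨hc, hks.1⟩
      · exact ⟨(hL d hd).1, fun h => (hL d hd).2 (List.mem_cons_of_mem _ h)⟩
    rw [search, List.all_eq_false]
    refine ⟨i, List.mem_finRange i, ?_⟩
    rw [Bool.not_eq_true, List.all_eq_false]
    exact ⟨j, List.mem_finRange j, by simp [h1, h2]⟩

/-- In a `3 × 7` array without multicolored hexagon, the permutation `f x ↦ g x` sends `g x` to
`f x` or to `h x`. -/
lemma step_seven {f g h : Fin 7 → Fin 7}
    (hf : Function.Injective f) (hg : Function.Injective g) (hh : Function.Injective h)
    (hfg : ∀ x, f x ≠ g x) (hgh : ∀ x, g x ≠ h x) (hhf : ∀ x, h x ≠ f x)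
    (hno : ∀ x y z, ¬ [f x, g x, g y, h y, h z, f z].Nodup) {x y : Fin 7} (hxy : f y = g x) :
    g y = f x ∨ g y = h x := by
  by_contra! hcon
  -- Rename the colors so that columns `x` and `y` begin with `(0, 1, 2)` and `(1, 3)`.
  have hy : g y ≠ g x := fun e => hfg y (hxy.trans e.symm)
  have hinj : Function.Injective ![f x, g x, h x, g y] := by
    have h1 := hfg x
    have h2 := hgh x
    have h3 := hhf x
    intro i j hij
    fin_cases i <;> fin_cases j <;> simp at hij ⊢ <;> grind
  obtain ⟨e, he⟩ := Equiv.Perm.exists_extending_pair ![f x, g x, h x, g y]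
    (![0, 1, 2, 3] : Fin 4 → Fin 7) hinj (by decide)
  have e0 : e (f x) = 0 := he 0
  have e1 : e (g x) = 1 := he 1
  have e2 : e (h x) = 2 := he 2
  have e3 : e (g y) = 3 := he 3
  let T : Col → Prop := fun c => ∃ w, c = (e (f w), e (g w), e (h w))
  have hex : ∀ c d d', T c → T d → T d' → hexagon c d d' = false := by
    rintro _ _ _ ⟨u, rfl⟩ ⟨v, rfl⟩ ⟨w, rfl⟩
    rw [hexagon, decide_eq_false_iff_not]
    intro hn
    exact hno u v w (List.Nodup.of_map e hn)
  have hbad : ∀ c L, T c → (∀ d ∈ L, T d ∧ d.1 ≠ c.1) → bad c L = false := by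
    intro c L hc hL
    have hL' : ∀ d ∈ c :: L, T d := by
      intro d hd
      rcases List.mem_cons.1 hd with rfl | hd
      · exact hc
      · exact (hL d hd).1
    have hthree : ((c :: L).any fun d => (c :: L).any fun e' =>
        hexagon c d e' || hexagon d c e' || hexagon d e' c) = false := by
      rw [List.any_eq_false]
      intro d hd
      rw [Bool.not_eq_true, List.any_eq_false]
      intro d' hd'
      simp [hex _ _ _ hc (hL' d hd) (hL' d' hd'), hex _ _ _ (hL' d hd) hc (hL' d' hd'),
        hex _ _ _ (hL' d hd) (hL' d' hd') hc]
    have htwo : (L.any fun d => c.2.1 == d.2.1 || c.2.2 == d.2.2) = false := by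
      rw [List.any_eq_false]
      intro d hd
      obtain ⟨⟨v, rfl⟩, hne⟩ := hL d hd
      obtain ⟨u, rfl⟩ := hc
      have huv : u ≠ v := fun huv => hne (by rw [huv])
      simp [hg.ne huv, hh.ne huv]
    obtain ⟨u, rfl⟩ := hc
    rw [bad, hthree, htwo]
    simp [hfg u, hgh u, hhf u]
  have hT : ∀ k, ∃ i j, T (k, i, j) := by
    intro k
    obtain ⟨w, hw⟩ := (Finite.injective_iff_surjective.1 hf) (e.symm k)
    exact ⟨e (g w), e (h w), w, by simp [hw]⟩
  have hTx : T (0, 1, 2) := ⟨x, by rw [e0, e1, e2]⟩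
  have hTy : T (1, 3, e (h y)) := ⟨y, by rw [hxy, e1, e3]⟩
  have hs := List.all_eq_true.1 search_spec (e (h y)) (List.mem_finRange _)
  rw [hbad _ _ hTy (by simpa using hTx), search_eq_false hbad hT _ _ (by decide)] at hs
  · simp at hs
  · intro d hd
    simp only [List.mem_cons, List.not_mem_nil, or_false] at hd
    rcases hd with rfl | rfl
    · exact ⟨hTy, by simp⟩
    · exact ⟨hTx, by simp⟩

/-- With two possible third rows `h x ≠ k x`, `step_seven` forces `f x ↦ g x` to be an involution
without fixed points on seven colors, which parity forbids. -/
lemma rainbow_of_seven {c : Fin 4 → Fin 7 → Fin 7} (hc : ProperColoring c) :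
    ∃ p q r x y z, [c p x, c q x, c q y, c r y, c r z, c p z].Nodup := by
  by_contra! hno
  obtain ⟨hrow, hcol⟩ := hc
  have hstep : ∀ r : Fin 4, 0 ≠ r → 1 ≠ r → ∀ x y, c 0 y = c 1 x → c 1 y = c 0 x ∨ c 1 y = c r x :=
    fun r h0 h1 x y => step_seven (hrow 0) (hrow 1) (hrow r)
      (fun x => (hcol x).ne (by decide)) (fun x => (hcol x).ne h1)
      (fun x => (hcol x).ne h0.symm) (hno 0 1 r)
  have hsurj := Finite.injective_iff_surjective.1 (hrow 0)
  choose t ht using fun x => hsurj (c 1 x)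
  have ht' : ∀ x, c 1 (t x) = c 0 x := by
    intro x
    rcases hstep 2 (by decide) (by decide) x (t x) (ht x) with h2 | h2
    · exact h2
    rcases hstep 3 (by decide) (by decide) x (t x) (ht x) with h3 | h3
    · exact h3
    exact absurd (hcol x (h2.symm.trans h3)) (by decide)
  have hsum : ∑ _x : Fin 7, (1 : ZMod 2) = 0 := by
    refine Finset.sum_involution (fun x _ => t x) (fun _ _ => by decide) ?_
      (fun _ _ => Finset.mem_univ _) ?_
    · intro x _ _ htx
      have := ht x
      rw [htx] at this
      exact absurd (hcol x this) (by decide)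
    · intro x _
      exact hrow 0 ((ht (t x)).trans (ht' x))
  revert hsum
  decide

/-- The Cayley table of an abelian group `G`, cut down to `m` rows. The six colors on a hexagon sum
to twice the sum of its vertices, so it suffices that no six elements of `G` sum to a double. -/
lemma exists_coloring_of_group {m n : ℕ} (hmn : m ≤ n) {G : Type*} [AddCommGroup G] [DecidableEq G]
    (e : Fin n ≃ G) (hG : ∀ S : Finset G, S.card = 6 → ∀ t, ∑ s ∈ S, s ≠ t + t) :
    ∃ c : Fin m → Fin n → Fin n, ProperColoring c ∧ ¬ HasRainbowCycle2k 3 c := by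
  refine ⟨fun i j => e.symm (e (Fin.castLE hmn i) + e j), ⟨?_, ?_⟩, ?_⟩
  · intro v w w' h
    simpa using h
  · intro w v v' h
    simpa using h
  · rw [hasRainbow_iff]
    rintro ⟨p, q, r, x, y, z, h⟩
    have h' := h.map e.injective
    simp only [List.map_cons, List.map_nil, Equiv.apply_symm_apply] at h'
    refine hG _ (List.toFinset_card_of_nodup h')
      (e (Fin.castLE hmn p) + e (Fin.castLE hmn q) + e (Fin.castLE hmn r) + e x + e y + e z) ?_
    have := List.sum_toFinset (fun g : G => g) h'
    rw [this]
    simp only [List.map_cons, List.map_nil, List.sum_cons, List.sum_nil]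
    abel

lemma exists_coloring_six {m : ℕ} (hm : m ≤ 6) :
    ∃ c : Fin m → Fin 6 → Fin 6, ProperColoring c ∧ ¬ HasRainbowCycle2k 3 c := by
  refine exists_coloring_of_group hm (G := ZMod 6) (Equiv.refl _) ?_
  intro S hS
  have : S = Finset.univ := (Finset.card_eq_iff_eq_univ S).1 hS
  subst this
  decide

lemma exists_coloring_eight {m : ℕ} (hm : m ≤ 8) :
    ∃ c : Fin m → Fin 8 → Fin 8, ProperColoring c ∧ ¬ HasRainbowCycle2k 3 c := by
  refine exists_coloring_of_group hm (G := Fin 3 → ZMod 2)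
    (Fintype.equivFinOfCardEq (by simp)).symm ?_
  intro S hS t ht
  have htwo : ∀ s : Fin 3 → ZMod 2, s + s = 0 := by decide
  have hcard : Sᶜ.card = 2 := by simp [Finset.card_compl, hS]
  obtain ⟨u, v, huv, hc⟩ := Finset.card_eq_two.1 hcard
  -- All eight elements sum to zero, hence so do the two missing colors, which are thus equal.
  have htot : ∑ s : Fin 3 → ZMod 2, s = 0 := by decide
  rw [← Finset.sum_add_sum_compl S, ht, htwo, hc, Finset.sum_pair huv, zero_add] at htot
  refine huv (add_right_cancel (b := v) ?_)
  rw [htot, htwo]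

/-- Four columns carry the Klein four-group pattern and three columns the cyclic one. -/
def tableSeven : Fin 3 → Fin 7 → Fin 7 :=
  ![![0, 1, 2, 3, 4, 5, 6], ![1, 0, 3, 2, 5, 6, 4], ![2, 3, 0, 1, 6, 4, 5]]

lemma exists_coloring_seven :
    ∃ c : Fin 3 → Fin 7 → Fin 7, ProperColoring c ∧ ¬ HasRainbowCycle2k 3 c := by
  refine ⟨tableSeven, ⟨by decide, by decide⟩, ?_⟩
  rw [hasRainbow_iff]
  decide +kernel

/-- Determination of `FMC(6)`: for `3 ≤ m ≤ n` with `n ≥ 6`, there is a proper edge-coloring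
of `K_{m,n}` using at most `n` colors with no multicolored 6-cycle iff
`(n = 6 ∧ 3 ≤ m ≤ 6)`, or `(m, n) = (3, 7)`, or `(n = 8 ∧ 3 ≤ m ≤ 8)`. -/
theorem stmt_17 (m n : ℕ) (hm3 : 3 ≤ m) (hmn : m ≤ n) (hn6 : 6 ≤ n) :
    (∃ c : Fin m → Fin n → Fin n, ProperColoring c ∧ ¬ HasRainbowCycle2k 3 c) ↔
      (n = 6 ∧ 3 ≤ m ∧ m ≤ 6) ∨ (m = 3 ∧ n = 7) ∨ (n = 8 ∧ 3 ≤ m ∧ m ≤ 8) := by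
  constructor
  · rintro ⟨c, ⟨hrow, hcol⟩, hno⟩
    rw [hasRainbow_iff] at hno
    have hn : n ≤ 8 := by
      by_contra! hn
      let p : Fin m := ⟨0, by omega⟩
      let q : Fin m := ⟨1, by omega⟩
      let r : Fin m := ⟨2, by omega⟩
      obtain ⟨x, y, z, h⟩ := rainbow_of_nine_le hn (hrow p) (hrow q) (hrow r)
        (fun x => (hcol x).ne (by simp [p, q])) (fun x => (hcol x).ne (by simp [q, r]))
        (fun x => (hcol x).ne (by simp [p, r]))
      exact hno ⟨p, q, r, x, y, z, h⟩
    have h7 : n = 7 → m = 3 := by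
      rintro rfl
      by_contra hm
      have hm4 : 4 ≤ m := by omega
      obtain ⟨p, q, r, x, y, z, h⟩ := rainbow_of_seven (c := fun i => c (Fin.castLE hm4 i))
        ⟨fun v => hrow _, fun w => (hcol w).comp (Fin.castLE_injective hm4)⟩
      exact hno ⟨_, _, _, x, y, z, h⟩
    omega
  · rintro (⟨rfl, -, hm⟩ | ⟨rfl, rfl⟩ | ⟨rfl, -, hm⟩)
    · exact exists_coloring_six hm
    · exact exists_coloring_seven
    · exact exists_coloring_eight hm
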